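/- Fix a budget B ≥ 0 and nonnegative bids c_1, …, c_{n−1} of the other agents. For a bid x of agent i (with x distinct from every c_j), form the combined sorted list of the n bids {x, c_1, …, c_{n−1}} in nondecreasing order, let k(x) be the largest index j in {1,…,n} such that the j-th smallest combined bid is at most B/j (k(x) = 0 if none exists), and say agent i wins with bid x if the position of x in the sorted combined list (i.e., 1 plus the number of c_j strictly less than x) is at most k(x). Then winning is monotone in the bid: if agent i wins with bid x and x′ ≤ x (with x′ also distinct from every c_j), then agent i wins with bid x′. -/

import Mathlib

/-- The combined bids `{x} ∪ {c j}` of all `m + 1` agents, sorted in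
nondecreasing order. -/
noncomputable def sortedCombinedBids (m : ℕ) (c : Fin m → ℝ) (x : ℝ) : List ℝ :=
  (x ::ₘ Multiset.map c Finset.univ.val).sort (· ≤ ·)

/-- `propShareK m B c x` is the largest index `j ∈ {1, …, m + 1}` such that the
`j`-th smallest combined bid is at most `B / j` (it is `0` if no such index
exists, since `sSup ∅ = 0` in `ℕ`). -/
noncomputable def propShareK (m : ℕ) (B : ℝ) (c : Fin m → ℝ) (x : ℝ) : ℕ :=
  sSup {j : ℕ | 1 ≤ j ∧ j ≤ m + 1 ∧
    (sortedCombinedBids m c x).getD (j - 1) 0 ≤ B / (j : ℝ)}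

/-- The position of agent `i`'s bid `x` in the sorted combined list:
`1` plus the number of other agents' bids strictly less than `x`. -/
noncomputable def bidPosition (m : ℕ) (c : Fin m → ℝ) (x : ℝ) : ℕ :=
  1 + Nat.card {j : Fin m // c j < x}

/-- Agent `i` wins with bid `x` iff its position in the sorted combined list is
at most `propShareK m B c x`. -/
noncomputable def winsWith (m : ℕ) (B : ℝ) (c : Fin m → ℝ) (x : ℝ) : Prop :=
  bidPosition m c x ≤ propShareK m B c x

/-! The `j`-th smallest of finitely many reals is at most `t` exactly when at least `j` of them are
at most `t`. Hence `j` is admissible for `propShareK` iff at least `j` of the combined bids are at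
most `B / j`, a condition that survives lowering one bid. So as `x` decreases, `propShareK` can only
grow, whereas the position of `x` can only shrink. -/

theorem getElem_le_iff_lt_countP_of_pairwise {α : Type*} [Preorder α] [DecidableLE α] {l : List α}
    (hl : l.Pairwise (· ≤ ·)) {i : ℕ} (hi : i < l.length) (t : α) :
    l[i] ≤ t ↔ i < l.countP (· ≤ t) := by
  induction l generalizing i with
  | nil => simp at hi
  | cons a l ih =>
    obtain ⟨ha, hl⟩ := List.pairwise_cons.1 hl
    by_cases hat : a ≤ t
    · rw [List.countP_cons_of_pos (by simpa using hat)]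
      cases i with
      | zero => simpa using hat
      | succ i => simpa using ih hl (Nat.lt_of_succ_lt_succ hi)
    · have not_le_of_mem : ∀ b ∈ a :: l, ¬b ≤ t :=
        List.forall_mem_cons.2 ⟨hat, fun b hb hbt => hat ((ha b hb).trans hbt)⟩
      have countP_eq_zero : (a :: l).countP (· ≤ t) = 0 :=
        List.countP_eq_zero.2 (by simpa using not_le_of_mem)
      simpa [countP_eq_zero] using not_le_of_mem _ (List.getElem_mem hi)

theorem getD_sort_le_iff_lt_countP {α : Type*} [LinearOrder α] {s : Multiset α} {i : ℕ}
    (hi : i < s.card) (d t : α) :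
    (s.sort (· ≤ ·)).getD i d ≤ t ↔ i < s.countP (· ≤ t) := by
  have hi' : i < (s.sort (· ≤ ·)).length := by rwa [Multiset.length_sort]
  rw [List.getD_eq_getElem _ _ hi',
    getElem_le_iff_lt_countP_of_pairwise (s.pairwise_sort (· ≤ ·)) hi', ← Multiset.coe_countP,
    Multiset.sort_eq]

theorem countP_le_cons_antitone {α : Type*} [Preorder α] [DecidableLE α] (s : Multiset α) (t : α) :
    Antitone fun x => (x ::ₘ s).countP (· ≤ t) := by
  intro y x hyx
  dsimp only
  by_cases hx : x ≤ t
  · rw [Multiset.countP_cons_of_pos (p := (· ≤ t)) s hx,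
      Multiset.countP_cons_of_pos (p := (· ≤ t)) s (hyx.trans hx)]
  · rw [Multiset.countP_cons_of_neg (p := (· ≤ t)) s hx]
    exact Multiset.countP_le_of_le _ (Multiset.le_cons_self s y)

theorem getD_sort_cons_mono {α : Type*} [LinearOrder α] (s : Multiset α) (i : ℕ) (d : α) :
    Monotone fun x => ((x ::ₘ s).sort (· ≤ ·)).getD i d := by
  intro y x hyx
  dsimp only
  by_cases hi : i < s.card + 1
  · have getD_le_iff (z t : α) :
        ((z ::ₘ s).sort (· ≤ ·)).getD i d ≤ t ↔ i < (z ::ₘ s).countP (· ≤ t) :=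
      getD_sort_le_iff_lt_countP (by rwa [Multiset.card_cons]) d t
    rw [getD_le_iff]
    exact ((getD_le_iff x _).1 le_rfl).trans_le (countP_le_cons_antitone s _ hyx)
  · have getD_eq (z : α) : ((z ::ₘ s).sort (· ≤ ·)).getD i d = d :=
      List.getD_eq_default _ _ (by simpa using hi)
    rw [getD_eq, getD_eq]

section ProportionalShare

variable (m : ℕ) (B : ℝ) (c : Fin m → ℝ)

theorem propShareK_antitone : Antitone (propShareK m B c) := by
  intro x' x hle
  refine csSup_le_csSup' ⟨m + 1, fun j hj => hj.2.1⟩ ?_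
  rintro j ⟨one_le_j, j_le, bid_le⟩
  exact ⟨one_le_j, j_le, (getD_sort_cons_mono _ (j - 1) 0 hle).trans bid_le⟩

theorem bidPosition_mono : Monotone (bidPosition m c) := fun _ _ hle =>
  Nat.add_le_add_left (Nat.card_mono (Set.toFinite _) fun _ hj => lt_of_lt_of_le hj hle) 1

theorem proportional_share_monotone_winning_general : Antitone (winsWith m B c) :=
  fun _ _ hle hwin =>
    (bidPosition_mono m c hle).trans (hwin.trans (propShareK_antitone m B c hle))

end ProportionalShare

/-- Monotonicity of winning in the proportional share allocation rule: fixing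
the budget `B ≥ 0` and the other agents' nonnegative bids `c`, if agent `i`
wins with bid `x` (distinct from every `c j`), and `x' ≤ x` is another bid
distinct from every `c j`, then agent `i` also wins with bid `x'`. -/
theorem proportional_share_monotone_winning
    (m : ℕ) (B : ℝ) (hB : 0 ≤ B) (c : Fin m → ℝ)
    (hc : ∀ j, 0 ≤ c j)
    (x x' : ℝ) (hx : ∀ j, c j ≠ x) (hx' : ∀ j, c j ≠ x')
    (hx'0 : 0 ≤ x') (hle : x' ≤ x)
    (hwin : winsWith m B c x) :
    winsWith m B c x' :=
  proportional_share_monotone_winning_general m B c hle hwin
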